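/- Let M be a nonzero Hilbert space contractively contained in H²(𝔻) (the scalar Hardy space). Suppose M is nearly invariant under the backward shift S* and ‖zh‖_M ≥ ‖h‖_M whenever zh ∈ M, and let g be a unit vector spanning the one-dimensional space M ⊖ (M ∩ zH²(𝔻)). Then N := {f ∈ H²(𝔻) : gf ∈ M} is a vector subspace of H²(𝔻) invariant under S*, every h ∈ M can be written uniquely as h = gf with f ∈ N, and ‖gf‖_M ≥ ‖f‖₂ for all f ∈ N. -/

import Mathlib

noncomputable section
open scoped ENNReal

/-- The Hardy space `H²(𝔻)`, identified isometrically with the space of square-summable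
sequences of Taylor coefficients. -/
abbrev H2 := lp (fun _ : ℕ => ℂ) 2

/-- The subspace `zH²(𝔻)`: functions vanishing at `0`. -/
def zH2 : Submodule ℂ H2 where
  carrier := {f | f 0 = 0}
  add_mem' := by
    intro a b ha hb
    simp only [Set.mem_setOf_eq] at *
    simp [lp.coeFn_add, ha, hb]
  zero_mem' := by simp [lp.coeFn_zero]
  smul_mem' := by
    intro c a ha
    simp only [Set.mem_setOf_eq] at *
    simp [lp.coeFn_smul, ha]

/-- The backward shift `S*` on `H²(𝔻)`. -/
def bsh (f : H2) : H2 :=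
  ⟨fun k => f (k + 1), by
    apply memℓp_gen
    have hf : Summable fun i => ‖f i‖ ^ (2 : ℝ≥0∞).toReal :=
      (memℓp_gen_iff (by norm_num)).1 (lp.memℓp f)
    exact hf.comp_injective (add_left_injective 1)⟩

/-- The forward shift (multiplication by `z`) on `H²(𝔻)`. -/
def fsh (f : H2) : H2 :=
  ⟨fun k => match k with | 0 => 0 | (j + 1) => f j, by
    apply memℓp_gen
    have hf : Summable fun i => ‖f i‖ ^ (2 : ℝ≥0∞).toReal :=
      (memℓp_gen_iff (by norm_num)).1 (lp.memℓp f)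
    apply (summable_nat_add_iff 1).mp
    convert hf using 1⟩

/-- The value at `z ∈ 𝔻` of `f ∈ H²(𝔻)`. -/
def ev (f : H2) (z : ℂ) : ℂ := ∑' m, f m * z ^ m

/-- `gRel ι g f m` says that `m ∈ M`, as a function on the disc, equals `g·f`. -/
def gRel {M : Type*} [NormedAddCommGroup M] [InnerProductSpace ℂ M]
    (ι : M →ₗ[ℂ] H2) (g : M) (f : H2) (m : M) : Prop :=
  ∀ z ∈ Metric.ball (0 : ℂ) 1, ev (ι m) z = ev (ι g) z * ev f z

lemma aux_summable (f : H2) {z : ℂ} (hz : ‖z‖ < 1) : Summable fun n => ‖f n * z ^ n‖ := by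
  refine Summable.of_nonneg_of_le (fun _ => norm_nonneg _) (fun n => ?_)
    ((summable_geometric_of_lt_one (norm_nonneg z) hz).mul_left ‖f‖)
  rw [norm_mul, norm_pow]
  gcongr
  exact lp.norm_apply_le_norm (by norm_num) f n

lemma aux_prod (g f : H2) {z : ℂ} (hz : ‖z‖ < 1) :
    HasSum (fun n => (∑ p ∈ Finset.HasAntidiagonal.antidiagonal n, g p.1 * f p.2) * z ^ n) (ev g z * ev f z) := by
  have h1 := aux_summable g hz
  have h2 := aux_summable f hz
  have h3 := (summable_norm_sum_mul_antidiagonal_of_summable_norm h1 h2).of_norm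
  have h4 := tsum_mul_tsum_eq_tsum_sum_antidiagonal_of_summable_norm h1 h2
  have key : (fun n => (∑ p ∈ Finset.HasAntidiagonal.antidiagonal n, g p.1 * f p.2) * z ^ n) =
      fun n => ∑ p ∈ Finset.HasAntidiagonal.antidiagonal n, g p.1 * z ^ p.1 * (f p.2 * z ^ p.2) := by
    funext n
    rw [Finset.sum_mul]
    refine Finset.sum_congr rfl fun p hp => ?_
    rw [← Finset.HasAntidiagonal.mem_antidiagonal.1 hp, pow_add]
    ring
  rw [key]
  unfold ev
  rw [h4]
  exact h3.hasSum

lemma aux_unique (a b : ℕ → ℂ) (F : ℂ → ℂ)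
    (ha : ∀ z : ℂ, ‖z‖ < 1 → HasSum (fun n => a n * z ^ n) (F z))
    (hb : ∀ z : ℂ, ‖z‖ < 1 → HasSum (fun n => b n * z ^ n) (F z)) : a = b := by
  have hball : ∀ᶠ z : ℂ in nhds 0, ‖z‖ < 1 := by
    filter_upwards [Metric.ball_mem_nhds (0 : ℂ) one_pos] with z hz
    simpa using hz
  have A : ∀ c : ℕ → ℂ, (∀ z : ℂ, ‖z‖ < 1 → HasSum (fun n => c n * z ^ n) (F z)) →
      HasFPowerSeriesAt F (FormalMultilinearSeries.ofScalars ℂ c) 0 := by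
    intro c hc
    rw [hasFPowerSeriesAt_iff]
    filter_upwards [hball] with z hz
    simpa [FormalMultilinearSeries.coeff_ofScalars, mul_comm] using hc z hz
  have h := (A a ha).eq_formalMultilinearSeries (A b hb)
  funext n
  have := congrArg (fun p => FormalMultilinearSeries.coeff p n) h
  simpa [FormalMultilinearSeries.coeff_ofScalars] using this

lemma aux_gRel_iff {M : Type*} [NormedAddCommGroup M] [InnerProductSpace ℂ M]
    (ι : M →ₗ[ℂ] H2) (g : M) (f : H2) (m : M) :
    gRel ι g f m ↔ PowerSeries.mk (fun n => ι m n) =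
      PowerSeries.mk (fun n => ι g n) * PowerSeries.mk (fun n => f n) := by
  have e : (PowerSeries.mk (fun n => ι m n) =
      PowerSeries.mk (fun n => ι g n) * PowerSeries.mk (fun n => f n)) ↔
      ∀ n, ι m n = ∑ p ∈ Finset.HasAntidiagonal.antidiagonal n, ι g p.1 * f p.2 := by
    simp [PowerSeries.ext_iff, PowerSeries.coeff_mul]
  rw [e]
  constructor
  · intro h
    refine congrFun (aux_unique _ _ (ev (ι m)) ?_ ?_)
    · intro z hz
      exact (aux_summable (ι m) hz).of_norm.hasSum
    · intro z hz
      rw [h z (by simpa using hz)]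
      exact aux_prod _ _ hz
  · intro h z hz
    have hz' : ‖z‖ < 1 := by simpa using hz
    rw [← (aux_prod (ι g) f hz').tsum_eq]
    unfold ev
    simp_rw [h]

lemma aux_fsh_bsh (f : H2) (h : f 0 = 0) : fsh (bsh f) = f := by
  ext n
  cases n with
  | zero => exact h.symm
  | succ n => rfl

/- STATEMENT 4: Let M be a nonzero Hilbert space contractively contained in H²(𝔻), nearly
invariant under S*, with ‖zh‖_M ≥ ‖h‖_M whenever zh ∈ M, and let g be a unit vector spanning
the one-dimensional space M ⊖ (M ∩ zH²(𝔻)).  Then N := {f ∈ H²(𝔻) : gf ∈ M} is an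
S*-invariant vector subspace of H²(𝔻), every h ∈ M is uniquely h = gf with f ∈ N, and
‖gf‖_M ≥ ‖f‖₂ for all f ∈ N. -/
theorem stmt4
    (M : Type*) [NormedAddCommGroup M] [InnerProductSpace ℂ M] [CompleteSpace M]
    [Nontrivial M]
    (ι : M →ₗ[ℂ] H2) (hinj : Function.Injective ι)
    (hcontr : ∀ m : M, ‖ι m‖ ≤ ‖m‖)
    -- nearly invariant under S* :
    (hnearly : ∀ f : M, ι f 0 = 0 → ∃ g : M, ι g = bsh (ι f))
    -- ‖zh‖_M ≥ ‖h‖_M whenever zh ∈ M :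
    (hz : ∀ h m : M, ι m = fsh (ι h) → ‖h‖ ≤ ‖m‖)
    -- g is a unit vector spanning M ⊖ (M ∩ zH²(𝔻)) :
    (g : M) (hg1 : ‖g‖ = 1)
    (hgspan : (zH2.comap ι)ᗮ = Submodule.span ℂ {g}) :
    ∃ N : Submodule ℂ H2,
      -- N = {f ∈ H²(𝔻) : gf ∈ M}
      (N : Set H2) = {f : H2 | ∃ m : M, gRel ι g f m} ∧
      -- N is invariant under the backward shift
      (∀ f ∈ N, bsh f ∈ N) ∧
      -- every h ∈ M can be written uniquely as h = gf with f ∈ N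
      (∀ m : M, ∃! f : H2, gRel ι g f m) ∧
      (∀ (f : H2) (m m' : M), gRel ι g f m → gRel ι g f m' → m = m') ∧
      -- ‖gf‖_M ≥ ‖f‖₂ for all f ∈ N
      (∀ (f : H2) (m : M), gRel ι g f m → ‖f‖ ≤ ‖m‖) := by
  classical
  have hg0 : ι g 0 ≠ 0 := by
    intro h0
    have h1 : g ∈ zH2.comap ι := h0
    have h2 : g ∈ (zH2.comap ι)ᗮ := by rw [hgspan]; exact Submodule.mem_span_singleton_self g
    have h3 := (Submodule.mem_orthogonal _ _).1 h2 g h1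
    rw [inner_self_eq_zero] at h3
    rw [h3, norm_zero] at hg1
    exact zero_ne_one hg1
  have horth : ∀ m : M, ι m 0 = 0 → inner ℂ m g = 0 := by
    intro m hm
    have h2 : g ∈ (zH2.comap ι)ᗮ := by rw [hgspan]; exact Submodule.mem_span_singleton_self g
    exact (Submodule.mem_orthogonal _ _).1 h2 m hm
  let c : M → ℂ := fun h => ι h 0 / ι g 0
  have hsubc : ∀ (h : M) (a : ℂ) (n : ℕ), ι (h - a • g) n = ι h n - a * ι g n := by
    intro h a n
    rw [map_sub, map_smul]
    rfl
  have hc0 : ∀ h : M, ι (h - c h • g) 0 = 0 := by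
    intro h
    rw [hsubc]
    simp [c, hg0]
  have hT : ∀ h : M, ∃ t : M, ι t = bsh (ι (h - c h • g)) := fun h => hnearly _ (hc0 h)
  choose T hT using hT
  have hTn : ∀ h : M, ‖c h‖ ^ 2 + ‖T h‖ ^ 2 ≤ ‖h‖ ^ 2 := by
    intro h
    have h1 : ‖T h‖ ≤ ‖h - c h • g‖ := by
      apply hz
      rw [hT, aux_fsh_bsh _ (hc0 h)]
    have h2 : ‖(h - c h • g) + c h • g‖ ^ 2 = ‖h - c h • g‖ ^ 2 + ‖c h • g‖ ^ 2 := by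
      have := norm_add_sq_eq_norm_sq_add_norm_sq_of_inner_eq_zero (𝕜 := ℂ) (h - c h • g) (c h • g)
        (by rw [inner_smul_right, horth _ (hc0 h), mul_zero])
      simpa [sq] using this
    rw [sub_add_cancel, norm_smul, hg1, mul_one] at h2
    have h3 : ‖T h‖ ^ 2 ≤ ‖h - c h • g‖ ^ 2 := by gcongr
    linarith
  have hsum : ∀ (n : ℕ) (h : M),
      ∑ k ∈ Finset.range n, ‖c (T^[k] h)‖ ^ 2 + ‖T^[n] h‖ ^ 2 ≤ ‖h‖ ^ 2 := by
    intro n h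
    induction n with
    | zero => simp
    | succ n ih =>
      rw [Finset.sum_range_succ, Function.iterate_succ_apply']
      have := hTn (T^[n] h)
      linarith
  have hsum' : ∀ (h : M) (n : ℕ), ∑ k ∈ Finset.range n, ‖c (T^[k] h)‖ ^ 2 ≤ ‖h‖ ^ 2 := by
    intro h n
    have := hsum n h
    have := sq_nonneg ‖T^[n] h‖
    linarith
  have hcoef : ∀ (n : ℕ) (h : M),
      ι h n = ∑ p ∈ Finset.HasAntidiagonal.antidiagonal n, ι g p.1 * c (T^[p.2] h) := by
    intro n
    induction n with
    | zero =>
      intro h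
      simp [c, mul_div_cancel₀ _ hg0]
    | succ n ih =>
      intro h
      rw [Finset.Nat.sum_antidiagonal_succ']
      simp only [Function.iterate_succ_apply, Function.iterate_zero, id]
      rw [← ih (T h), hT h]
      change _ = _ + ι (h - c h • g) (n + 1)
      rw [hsubc]
      ring
  have hsm : ∀ h : M, Summable fun k => ‖c (T^[k] h)‖ ^ 2 := fun h =>
    summable_of_sum_range_le (fun _ => sq_nonneg _) (hsum' h)
  let F : M → H2 := fun h => ⟨fun k => c (T^[k] h), by
    apply memℓp_gen
    simpa using hsm h⟩
  have hFrel : ∀ h : M, gRel ι g (F h) h := by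
    intro h
    rw [aux_gRel_iff]
    ext n
    simp only [PowerSeries.coeff_mul, PowerSeries.coeff_mk]
    exact hcoef n h
  have hFnorm : ∀ h : M, ‖F h‖ ≤ ‖h‖ := by
    intro h
    have h1 : ‖F h‖ ^ 2 = ∑' k, ‖c (T^[k] h)‖ ^ 2 := by
      have := lp.norm_rpow_eq_tsum (p := 2) (by norm_num) (F h)
      simpa [F] using this
    have h2 : ‖F h‖ ^ 2 ≤ ‖h‖ ^ 2 := by
      rw [h1]
      exact Real.tsum_le_of_sum_range_le (fun _ => sq_nonneg _) (hsum' h)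
    exact (sq_le_sq₀ (norm_nonneg _) (norm_nonneg _)).1 h2
  have hgne : PowerSeries.mk (fun n => ι g n) ≠ 0 := by
    intro h
    apply hg0
    simpa using congrArg (PowerSeries.coeff 0) h
  have huniq : ∀ (f f' : H2) (m : M), gRel ι g f m → gRel ι g f' m → f = f' := by
    intro f f' m h h'
    rw [aux_gRel_iff] at h h'
    have h3 := mul_left_cancel₀ hgne (h.symm.trans h')
    ext n
    simpa using congrArg (PowerSeries.coeff n) h3
  refine ⟨{ carrier := {f : H2 | ∃ m : M, gRel ι g f m}
            add_mem' := ?_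
            zero_mem' := ?_
            smul_mem' := ?_ }, rfl, ?_, ?_, ?_, ?_⟩
  · rintro a b ⟨m, hm⟩ ⟨m', hm'⟩
    refine ⟨m + m', ?_⟩
    rw [aux_gRel_iff, PowerSeries.ext_iff] at *
    intro n
    have h1 := hm n
    have h2 := hm' n
    simp only [PowerSeries.coeff_mul, PowerSeries.coeff_mk] at *
    simp [h1, h2, mul_add, Finset.sum_add_distrib]
  · refine ⟨0, ?_⟩
    intro z _
    simp [ev]
  · rintro a b ⟨m, hm⟩
    refine ⟨a • m, ?_⟩
    rw [aux_gRel_iff, PowerSeries.ext_iff] at *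
    intro n
    have h1 := hm n
    simp only [PowerSeries.coeff_mul, PowerSeries.coeff_mk] at *
    simp [h1, Finset.mul_sum, mul_left_comm]
  · rintro f ⟨m, hm⟩
    refine ⟨T m, ?_⟩
    have hf : f = F m := huniq _ _ _ hm (hFrel m)
    have : bsh f = F (T m) := by
      rw [hf]
      ext n
      rfl
    rw [this]
    exact hFrel _
  · intro m
    exact ⟨F m, hFrel m, fun f hf => huniq _ _ _ hf (hFrel m)⟩
  · intro f m m' h h'
    rw [aux_gRel_iff] at h h'
    apply hinj
    ext n
    simpa using congrArg (PowerSeries.coeff n) (h.trans h'.symm)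
  · intro f m h
    rw [huniq _ _ _ h (hFrel m)]
    exact hFnorm m
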